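/- arXiv:1508.03232 — 2 statements merged into one kernel-verified Lean document; each statement's English description precedes it below -/
import Mathlib

section
/- Let p and q be complex-valued polynomial functions on ℝ³ that are homogeneous of degrees ℓ and m respectively with ℓ ≠ m, and both harmonic (annihilated by the Euclidean Laplacian Σ_j ∂²/∂x_j²). Then the surface integral over the unit sphere S² ⊂ ℝ³ of the product p·q vanishes: ∫_{S²} p(n) q(n) dA(n) = 0. -/
open MeasureTheory

/-- The partial derivative `∂f/∂x_j` of a complex-valued function on Euclidean `ℝ³`. -/
noncomputable def pdE (j : Fin 3) (f : EuclideanSpace ℝ (Fin 3) → ℂ)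
    (x : EuclideanSpace ℝ (Fin 3)) : ℂ :=
  fderiv ℝ f x (EuclideanSpace.single j 1)

/-- Evaluation of a complex polynomial in three variables at a real point of `ℝ³`. -/
noncomputable def evalP (P : MvPolynomial (Fin 3) ℂ) (x : EuclideanSpace ℝ (Fin 3)) : ℂ :=
  MvPolynomial.eval (fun i => (x i : ℂ)) P


lemma evalP_differentiable (P : MvPolynomial (Fin 3) ℂ) : Differentiable ℝ (evalP P) := by
  induction P using MvPolynomial.induction_on with
  | C a =>
    have : evalP (MvPolynomial.C a) = fun _ => a := by ext x; simp [evalP]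
    rw [this]; exact differentiable_const a
  | add p q hp hq =>
    have : evalP (p + q) = fun x => evalP p x + evalP q x := by ext x; simp [evalP]
    rw [this]; exact hp.add hq
  | mul_X p i hp =>
    have : evalP (p * MvPolynomial.X i) = fun x => evalP p x * ((x i : ℝ) : ℂ) := by
      ext x; simp [evalP]
    rw [this]
    refine hp.mul (Complex.ofRealCLM.differentiable.comp ?_)
    fun_prop

lemma pdE_evalP (j : Fin 3) (P : MvPolynomial (Fin 3) ℂ) :
    pdE j (evalP P) = evalP (MvPolynomial.pderiv j P) := by
  induction P using MvPolynomial.induction_on with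
  | C a =>
    have : evalP (MvPolynomial.C a) = fun _ => a := by ext x; simp [evalP]
    ext x
    rw [this]; simp [pdE, evalP]
  | add p q hp hq =>
    have : evalP (p + q) = fun x => evalP p x + evalP q x := by ext x; simp [evalP]
    ext x
    have h1 := congrFun hp x
    have h2 := congrFun hq x
    simp only [pdE] at h1 h2 ⊢
    rw [this, fderiv_fun_add (evalP_differentiable p x) (evalP_differentiable q x)]
    simp [h1, h2, evalP]
  | mul_X p i hp =>
    have : evalP (p * MvPolynomial.X i) = fun x => evalP p x * ((x i : ℝ) : ℂ) := by
      ext x; simp [evalP]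
    ext x
    have h1 := congrFun hp x
    have hd : HasFDerivAt (fun x : (EuclideanSpace ℝ (Fin 3)) => ((x i : ℝ) : ℂ))
        (Complex.ofRealCLM.comp (EuclideanSpace.proj i : (EuclideanSpace ℝ (Fin 3)) →L[ℝ] ℝ)) x :=
      (Complex.ofRealCLM.comp (EuclideanSpace.proj i : (EuclideanSpace ℝ (Fin 3)) →L[ℝ] ℝ)).hasFDerivAt
    simp only [pdE] at h1 ⊢
    rw [this, ((evalP_differentiable p x).hasFDerivAt.fun_mul hd).fderiv]
    simp [h1, evalP, Derivation.leibniz, MvPolynomial.pderiv_X, Pi.single_apply]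
    by_cases hij : i = j
    · subst hij; simp
    · simp [hij]

noncomputable def gaussE (x : EuclideanSpace ℝ (Fin 3)) : ℝ := Real.exp (-‖x‖ ^ 2)

lemma gaussE_hasFDerivAt (x : (EuclideanSpace ℝ (Fin 3))) :
    HasFDerivAt (fun x : (EuclideanSpace ℝ (Fin 3)) => ((gaussE x : ℝ) : ℂ))
      (Complex.ofRealCLM.comp (gaussE x • (-(2 • innerSL ℝ x)))) x := by
  have h : HasFDerivAt (fun x : (EuclideanSpace ℝ (Fin 3)) => -‖x‖ ^ 2) (-(2 • innerSL ℝ x)) x :=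
    (hasStrictFDerivAt_norm_sq x).hasFDerivAt.neg
  exact Complex.ofRealCLM.hasFDerivAt.comp x h.exp

lemma gaussE_continuous : Continuous gaussE := by unfold gaussE; fun_prop

lemma integrable_evalP_aux (P : MvPolynomial (Fin 3) ℂ) :
    ∀ k : ℕ, Integrable (fun x : (EuclideanSpace ℝ (Fin 3)) => evalP P x * ((‖x‖ ^ k * gaussE x : ℝ) : ℂ)) := by
  induction P using MvPolynomial.induction_on with
  | C a =>
    intro k
    have : Integrable (fun x : (EuclideanSpace ℝ (Fin 3)) => (‖x‖ ^ k * gaussE x : ℝ)) := by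
      have := (integrable_fun_norm_addHaar (volume : Measure (EuclideanSpace ℝ (Fin 3)))
        (f := fun r : ℝ => r ^ k * Real.exp (-r ^ 2))).2 ?_
      · exact this
      · have h := (integrable_rpow_mul_exp_neg_mul_sq one_pos
          (s := ((2 + k : ℕ) : ℝ)) (by have : (0:ℝ) ≤ ((2 + k : ℕ) : ℝ) := Nat.cast_nonneg _
                                       linarith)).integrableOn (s := Set.Ioi 0)
        refine h.congr_fun (fun y _ => ?_) measurableSet_Ioi
        simp only [Real.rpow_natCast]
        simp [pow_add, mul_assoc]
    simpa [evalP] using (this.ofReal (𝕜 := ℂ)).const_mul a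
  | add p q hp hq =>
    intro k
    refine ((hp k).add (hq k)).congr (Filter.Eventually.of_forall fun x => ?_)
    simp [evalP, add_mul]
  | mul_X p i hp =>
    intro k
    refine (hp (k + 1)).mono ?_ (Filter.Eventually.of_forall fun x => ?_)
    · refine Continuous.aestronglyMeasurable ?_
      refine (evalP_differentiable _).continuous.mul (Complex.continuous_ofReal.comp ?_)
      exact (continuous_norm.pow k).mul gaussE_continuous
    · have h1 : |x i| ≤ ‖x‖ := by simpa using EuclideanSpace.norm_eq x ▸ PiLp.norm_apply_le x i
      have h2 : evalP (p * MvPolynomial.X i) x = evalP p x * ((x i : ℝ) : ℂ) := by simp [evalP]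
      rw [h2]
      simp only [norm_mul, Complex.norm_real, norm_pow, Real.norm_eq_abs, abs_norm]
      rw [mul_assoc]
      refine mul_le_mul_of_nonneg_left ?_ (norm_nonneg _)
      rw [pow_succ', mul_assoc]
      exact mul_le_mul_of_nonneg_right h1 (by positivity)

lemma integrable_evalP (P : MvPolynomial (Fin 3) ℂ) :
    Integrable (fun x : (EuclideanSpace ℝ (Fin 3)) => evalP P x * ((gaussE x : ℝ) : ℂ)) := by
  simpa using integrable_evalP_aux P 0

lemma gauss_ibp (j : Fin 3) (A : MvPolynomial (Fin 3) ℂ) :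
    ∫ x : (EuclideanSpace ℝ (Fin 3)), evalP (2 * (MvPolynomial.X j * A)) x * ((gaussE x : ℝ) : ℂ) =
      ∫ x : (EuclideanSpace ℝ (Fin 3)), evalP (MvPolynomial.pderiv j A) x * ((gaussE x : ℝ) : ℂ) := by
  have hf : ∀ x, fderiv ℝ (evalP A) x (EuclideanSpace.single j 1)
      = evalP (MvPolynomial.pderiv j A) x := fun x => congrFun (pdE_evalP j A) x
  have hg : ∀ x : (EuclideanSpace ℝ (Fin 3)), evalP A x * fderiv ℝ (fun x : (EuclideanSpace ℝ (Fin 3)) => ((gaussE x : ℝ) : ℂ)) x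
      (EuclideanSpace.single j 1) =
      - (evalP (2 * (MvPolynomial.X j * A)) x * ((gaussE x : ℝ) : ℂ)) := by
    intro x
    rw [(gaussE_hasFDerivAt x).fderiv]
    simp [evalP, EuclideanSpace.inner_single_right]
    ring
  have := integral_mul_fderiv_eq_neg_fderiv_mul_of_integrable (μ := (volume : Measure (EuclideanSpace ℝ (Fin 3))))
    (f := evalP A) (g := fun x : (EuclideanSpace ℝ (Fin 3)) => ((gaussE x : ℝ) : ℂ)) (v := EuclideanSpace.single j 1)
    (by simp only [hf]; exact integrable_evalP _)
    (by simp only [hg]; exact (integrable_evalP _).neg)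
    (integrable_evalP _)
    (fun x _ => evalP_differentiable A x)
    (fun x _ => (gaussE_hasFDerivAt x).differentiableAt)
  simp only [hf, hg, integral_neg] at this
  exact neg_injective this

lemma evalP_smul_of_homogeneous {P : MvPolynomial (Fin 3) ℂ} {k : ℕ} (hP : P.IsHomogeneous k)
    (r : ℝ) (x : (EuclideanSpace ℝ (Fin 3))) : evalP P (r • x) = (r : ℂ) ^ k * evalP P x := by
  unfold evalP
  rw [MvPolynomial.eval_eq', MvPolynomial.eval_eq', Finset.mul_sum]
  refine Finset.sum_congr rfl fun d hd => ?_
  have hdk : ∑ i, d i = k := by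
    have h := hP (MvPolynomial.mem_support_iff.1 hd)
    simpa [Finsupp.weight_apply, Finsupp.sum_fintype] using h
  simp only [PiLp.smul_apply, smul_eq_mul, Complex.ofReal_mul, mul_pow, Finset.prod_mul_distrib,
    Finset.prod_pow_eq_pow_sum, hdk]
  ring

lemma polar (R : MvPolynomial (Fin 3) ℂ) (k : ℕ) (hR : R.IsHomogeneous k) :
    ∫ x : (EuclideanSpace ℝ (Fin 3)), evalP R x * ((gaussE x : ℝ) : ℂ) =
      (∫ n : Metric.sphere (0 : (EuclideanSpace ℝ (Fin 3))) 1, evalP R (n : (EuclideanSpace ℝ (Fin 3))) ∂((volume : Measure (EuclideanSpace ℝ (Fin 3))).toSphere)) *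
        (((1 / 2) * Real.Gamma (((2 + k : ℕ) + 1) / 2) : ℝ) : ℂ) := by
  have h1 : ∫ x : (EuclideanSpace ℝ (Fin 3)), evalP R x * ((gaussE x : ℝ) : ℂ) =
      ∫ x : ({(0 : (EuclideanSpace ℝ (Fin 3)))}ᶜ : Set (EuclideanSpace ℝ (Fin 3))), evalP R x * ((gaussE x : ℝ) : ℂ)
        ∂((volume : Measure (EuclideanSpace ℝ (Fin 3))).comap (↑)) := by
    rw [integral_subtype_comap (measurableSet_singleton _).compl
      fun x : (EuclideanSpace ℝ (Fin 3)) => evalP R x * ((gaussE x : ℝ) : ℂ), restrict_compl_singleton]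
  have h2 := (volume : Measure (EuclideanSpace ℝ (Fin 3))).measurePreserving_homeomorphUnitSphereProd.integral_comp
    (Homeomorph.measurableEmbedding _)
    (fun z : Metric.sphere (0 : (EuclideanSpace ℝ (Fin 3))) 1 × Set.Ioi (0 : ℝ) =>
      evalP R z.1 * (((z.2 : ℝ) ^ k * Real.exp (-(z.2 : ℝ) ^ 2) : ℝ) : ℂ))
  rw [integral_prod_mul (f := fun z : Metric.sphere (0 : (EuclideanSpace ℝ (Fin 3))) 1 => evalP R z)
    (g := fun r : Set.Ioi (0 : ℝ) => (((r : ℝ) ^ k * Real.exp (-(r : ℝ) ^ 2) : ℝ) : ℂ))] at h2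
  rw [h1]
  convert h2 using 1
  · refine integral_congr_ae (Filter.Eventually.of_forall fun x => ?_)
    have hx : ‖(x : (EuclideanSpace ℝ (Fin 3)))‖ ≠ 0 := norm_ne_zero_iff.2 x.2
    have := evalP_smul_of_homogeneous hR ‖(x : (EuclideanSpace ℝ (Fin 3)))‖ (‖(x : (EuclideanSpace ℝ (Fin 3)))‖⁻¹ • (x : (EuclideanSpace ℝ (Fin 3))))
    rw [smul_inv_smul₀ hx] at this
    simp only [this, gaussE, homeomorphUnitSphereProd_apply_fst_coe,
      homeomorphUnitSphereProd_apply_snd_coe]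
    push_cast
    ring
  · congr 1
    rw [integral_complex_ofReal]
    congr 1
    have hd : Module.finrank ℝ (EuclideanSpace ℝ (Fin 3)) - 1 = 2 := by simp
    rw [hd]
    simp only [Measure.volumeIoiPow, ENNReal.ofReal]
    rw [integral_withDensity_eq_integral_smul,
      integral_subtype_comap measurableSet_Ioi
        fun a : ℝ ↦ Real.toNNReal (a ^ 2) • (a ^ k * Real.exp (-a ^ 2))]
    · have hk : (0:ℝ) ≤ ((2 + k : ℕ) : ℝ) := Nat.cast_nonneg _
      rw [← integral_rpow_mul_exp_neg_rpow (p := 2) (q := ((2 + k : ℕ) : ℝ)) two_pos (by linarith)]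
      refine setIntegral_congr_fun measurableSet_Ioi fun x hx ↦ ?_
      simp only [Real.rpow_natCast, Real.rpow_ofNat]
      rw [NNReal.smul_def, Real.coe_toNNReal _ (sq_nonneg _)]
      simp [pow_add, mul_assoc]
    · exact (measurable_subtype_coe.pow_const _).real_toNNReal

/-- Harmonic homogeneous polynomials of distinct degrees `ℓ ≠ m` are orthogonal with
respect to the surface measure of the unit sphere `S² ⊂ ℝ³`:
`∫_{S²} p(n) q(n) dA(n) = 0`. -/
theorem integral_sphere_mul_eq_zero_of_harmonic_homogeneous_ne_degree
    (P Q : MvPolynomial (Fin 3) ℂ) (ℓ m : ℕ) (hne : ℓ ≠ m)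
    (hP : P.IsHomogeneous ℓ) (hQ : Q.IsHomogeneous m)
    (hPharm : ∀ x, ∑ j : Fin 3, pdE j (fun y => pdE j (evalP P) y) x = 0)
    (hQharm : ∀ x, ∑ j : Fin 3, pdE j (fun y => pdE j (evalP Q) y) x = 0) :
    (∫ n : Metric.sphere (0 : EuclideanSpace ℝ (Fin 3)) 1,
      evalP P (n : EuclideanSpace ℝ (Fin 3)) * evalP Q (n : EuclideanSpace ℝ (Fin 3))
        ∂((volume : Measure (EuclideanSpace ℝ (Fin 3))).toSphere)) = 0 := by
  have hpol := polar (P * Q) (ℓ + m) (hP.mul hQ)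
  have hmul : ∀ (A B : MvPolynomial (Fin 3) ℂ) (x : (EuclideanSpace ℝ (Fin 3))),
      evalP (A * B) x = evalP A x * evalP B x := fun A B x => by simp [evalP]
  have hsub : ∀ (A B : MvPolynomial (Fin 3) ℂ) (x : (EuclideanSpace ℝ (Fin 3))),
      evalP (A - B) x = evalP A x - evalP B x := fun A B x => by simp [evalP]
  have hadd : ∀ (A B : MvPolynomial (Fin 3) ℂ) (x : (EuclideanSpace ℝ (Fin 3))),
      evalP (A + B) x = evalP A x + evalP B x := fun A B x => by simp [evalP]
  let A : Fin 3 → MvPolynomial (Fin 3) ℂ := fun j =>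
    P * MvPolynomial.pderiv j Q - Q * MvPolynomial.pderiv j P
  have hsum : ∑ j, ∫ x : (EuclideanSpace ℝ (Fin 3)), evalP (2 * (MvPolynomial.X j * A j)) x * ((gaussE x : ℝ) : ℂ) =
      ∑ j, ∫ x : (EuclideanSpace ℝ (Fin 3)), evalP (MvPolynomial.pderiv j (A j)) x * ((gaussE x : ℝ) : ℂ) :=
    Finset.sum_congr rfl fun j _ => gauss_ibp j (A j)
  rw [← integral_finsetSum _ fun j _ => integrable_evalP _,
    ← integral_finsetSum _ fun j _ => integrable_evalP _] at hsum
  have hr : ∀ x : (EuclideanSpace ℝ (Fin 3)), ∑ j, evalP (MvPolynomial.pderiv j (A j)) x * ((gaussE x : ℝ) : ℂ) = 0 := by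
    intro x
    have hp := hPharm x
    have hq := hQharm x
    simp only [pdE_evalP] at hp hq
    simp only [Fin.sum_univ_three] at hp hq
    simp only [A, Fin.sum_univ_three, map_sub, Derivation.leibniz, smul_eq_mul, hsub, hadd, hmul]
    linear_combination (evalP P x * gaussE x) * hq - (evalP Q x * gaussE x) * hp
  have hl : ∀ x : (EuclideanSpace ℝ (Fin 3)), ∑ j, evalP (2 * (MvPolynomial.X j * A j)) x * ((gaussE x : ℝ) : ℂ) =
      (2 * ((m : ℂ) - ℓ)) * (evalP (P * Q) x * ((gaussE x : ℝ) : ℂ)) := by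
    intro x
    have hp := congrArg (fun p => evalP p x) hP.sum_X_mul_pderiv
    have hq := congrArg (fun p => evalP p x) hQ.sum_X_mul_pderiv
    have h2 : evalP 2 x = 2 := by simp [evalP]
    have hc : ∀ n : ℕ, evalP (n : MvPolynomial (Fin 3) ℂ) x = n := by simp [evalP]
    simp only [Fin.sum_univ_three, nsmul_eq_mul, hadd, hmul, hc] at hp hq
    simp only [A, Fin.sum_univ_three, hsub, hadd, hmul, h2]
    linear_combination (2 * evalP P x * gaussE x) * hq - (2 * evalP Q x * gaussE x) * hp
  simp only [hr, hl, integral_zero, integral_const_mul] at hsum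
  have hml : (2 * ((m : ℂ) - ℓ)) ≠ 0 := by
    refine mul_ne_zero two_ne_zero (sub_ne_zero.2 ?_)
    exact_mod_cast hne.symm
  have h0 := (mul_eq_zero.1 hsum).resolve_left hml
  rw [hpol] at h0
  have hG : (((1 / 2) * Real.Gamma (((2 + (ℓ + m) : ℕ) + 1) / 2) : ℝ) : ℂ) ≠ 0 := by
    refine Complex.ofReal_ne_zero.2 (ne_of_gt ?_)
    have : 0 < Real.Gamma (((2 + (ℓ + m) : ℕ) + 1) / 2) := Real.Gamma_pos_of_pos (by positivity)
    positivity
  have := (mul_eq_zero.1 h0).resolve_right hG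
  simpa only [hmul] using this
end

section
/- Let ρ : ℝ³ → ℝ be smooth with |ρ(x)| ≤ C e^{−a|x|} for some constants C, a > 0, and let φ : ℝ³ → ℝ be smooth with Δφ = −ρ. Suppose there exist harmonic homogeneous complex-valued polynomials p_m of degree m (m = 0, 1, 2, …) such that for every K ∈ ℕ, as |x| → ∞, φ(x) = Σ_{m=0}^{K} p_m(x/|x|)/|x|^{m+1} + O(|x|^{−K−2}) and ∂φ/∂r(x) = Σ_{m=0}^{K} −(m+1) p_m(x/|x|)/|x|^{m+2} + O(|x|^{−K−2}), where ∂/∂r is the radial derivative. Then for every ℓ ∈ ℕ and every ζ ∈ ℂ, ∫_{ℝ³} ρ(x) x(ζ)^ℓ d³x = (2ℓ+1) ∫_{S²} p_ℓ(n) n(ζ)^ℓ dA(n). -/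
open MeasureTheory Asymptotics Filter

/-- `x(ζ) = (1/2)(x₁ + i x₂) + ζ x₃ − (1/2)(x₁ − i x₂) ζ²` on Euclidean `ℝ³`. -/
noncomputable def xzE (ζ : ℂ) (x : EuclideanSpace ℝ (Fin 3)) : ℂ :=
  (1 / 2 : ℂ) * ((x 0 : ℂ) + Complex.I * (x 1 : ℂ)) + ζ * (x 2 : ℂ)
    - (1 / 2 : ℂ) * ((x 0 : ℂ) - Complex.I * (x 1 : ℂ)) * ζ ^ 2

/-- Partial derivative `∂f/∂x_j` of a real-valued function on Euclidean `ℝ³`. -/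
noncomputable def pdER (j : Fin 3) (f : EuclideanSpace ℝ (Fin 3) → ℝ)
    (x : EuclideanSpace ℝ (Fin 3)) : ℝ :=
  fderiv ℝ f x (EuclideanSpace.single j 1)

/-- Euclidean three-space. -/
abbrev E3 : Type := EuclideanSpace ℝ (Fin 3)

/-- The null vector of coefficients of the linear form `xzE ζ`. -/
noncomputable def vvE (ζ : ℂ) : Fin 3 → ℂ :=
  ![(1 - ζ ^ 2) / 2, Complex.I * (1 + ζ ^ 2) / 2, ζ]

lemma vvE_null (ζ : ℂ) : ∑ j, vvE ζ j ^ 2 = 0 := by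
  simp [vvE, Fin.sum_univ_three]
  ring_nf
  simp [Complex.I_sq]

lemma vvE_sum (ζ : ℂ) (x : E3) : ∑ j, vvE ζ j * (x j : ℂ) = xzE ζ x := by
  simp [vvE, xzE, Fin.sum_univ_three]
  ring

lemma normsq_sum (x : E3) : ∑ j, (x j : ℂ) ^ 2 = ((‖x‖ ^ 2 : ℝ) : ℂ) := by
  rw [EuclideanSpace.norm_sq_eq]
  simp

lemma xzE_line (ζ : ℂ) (x : E3) (j : Fin 3) (t : ℝ) :
    xzE ζ (x + t • EuclideanSpace.single j 1) = xzE ζ x + t * vvE ζ j := by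
  fin_cases j <;> simp [xzE, vvE] <;> ring

lemma normsq_line (x : E3) (j : Fin 3) (t : ℝ) :
    ‖x + t • (EuclideanSpace.single j 1 : E3)‖ ^ 2 = ‖x‖ ^ 2 + 2 * t * x j + t ^ 2 := by
  rw [EuclideanSpace.norm_sq_eq, EuclideanSpace.norm_sq_eq]
  fin_cases j <;> simp [Fin.sum_univ_three] <;> ring

lemma coord_line (x : E3) (j : Fin 3) (t : ℝ) :
    (x + t • (EuclideanSpace.single j 1 : E3)) j = x j + t := by
  simp

lemma hasLineDerivAt_xz_pow (ζ : ℂ) (n : ℕ) (x : E3) (j : Fin 3) :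
    HasLineDerivAt ℝ (fun y : E3 => xzE ζ y ^ n) (n * xzE ζ x ^ (n - 1) * vvE ζ j) x
      (EuclideanSpace.single j 1) := by
  unfold HasLineDerivAt
  simp only [xzE_line]
  have h : HasDerivAt (fun t : ℝ => xzE ζ x + (t : ℂ) * vvE ζ j) (vvE ζ j) 0 := by
    simpa using ((Complex.ofRealCLM.hasDerivAt (x := (0 : ℝ))).mul_const (vvE ζ j)).const_add
      (xzE ζ x)
  exact (h.pow n).congr_deriv (by simp)

lemma hasLineDerivAt_radial (H H' : ℝ → ℝ) (hH : ∀ s, HasDerivAt H (H' s) s) (c : ℝ) (x : E3)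
    (j : Fin 3) :
    HasLineDerivAt ℝ (fun y : E3 => (H (c * ‖y‖ ^ 2) : ℂ))
      (2 * c * x j * H' (c * ‖x‖ ^ 2)) x (EuclideanSpace.single j 1) := by
  unfold HasLineDerivAt
  simp only [normsq_line]
  have h : HasDerivAt (fun t : ℝ => c * (‖x‖ ^ 2 + 2 * t * x j + t ^ 2)) (c * (2 * x j)) 0 := by
    have h1 : HasDerivAt (fun t : ℝ => t) 1 0 := hasDerivAt_id 0
    have := ((((h1.const_mul 2).mul_const (x j)).const_add (‖x‖ ^ 2)).add (h1.pow 2)).const_mul c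
    simpa using this
  have h2 := (HasDerivAt.comp (0 : ℝ) (hH _) h).ofReal_comp
  refine h2.congr_deriv ?_
  simp
  ring

lemma hasLineDerivAt_coord (x : E3) (j : Fin 3) :
    HasLineDerivAt ℝ (fun y : E3 => (y j : ℂ)) 1 x (EuclideanSpace.single j 1) := by
  unfold HasLineDerivAt
  simp only [coord_line]
  have h : HasDerivAt (fun t : ℝ => x j + t) 1 0 := (hasDerivAt_id 0).const_add _
  simpa using h.ofReal_comp

lemma HasLineDerivAt.cmul {f g : E3 → ℂ} {f' g' : ℂ} {x v : E3}
    (hf : HasLineDerivAt ℝ f f' x v) (hg : HasLineDerivAt ℝ g g' x v) :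
    HasLineDerivAt ℝ (fun y => f y * g y) (f' * g x + f x * g') x v := by
  unfold HasLineDerivAt at *
  exact (HasDerivAt.mul hf hg).congr_deriv (by simp)

/-- The test function `x(ζ)^n G(c|x|²)`. -/
noncomputable def psi0 (ζ : ℂ) (n : ℕ) (G : ℝ → ℝ) (c : ℝ) (x : E3) : ℂ :=
  xzE ζ x ^ n * (G (c * ‖x‖ ^ 2) : ℂ)

/-- Its first partial derivative. -/
noncomputable def psi1 (ζ : ℂ) (n : ℕ) (G G1 : ℝ → ℝ) (c : ℝ) (j : Fin 3) (x : E3) : ℂ :=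
  n * xzE ζ x ^ (n - 1) * vvE ζ j * (G (c * ‖x‖ ^ 2) : ℂ)
    + xzE ζ x ^ n * (2 * c * x j * G1 (c * ‖x‖ ^ 2))

/-- Its second partial derivative. -/
noncomputable def psi2 (ζ : ℂ) (n : ℕ) (G G1 G2 : ℝ → ℝ) (c : ℝ) (j : Fin 3) (x : E3) : ℂ :=
  n * ((n - 1 : ℕ) * xzE ζ x ^ (n - 1 - 1)) * vvE ζ j ^ 2 * (G (c * ‖x‖ ^ 2) : ℂ)
    + 2 * (n * xzE ζ x ^ (n - 1) * vvE ζ j) * (2 * c * x j * G1 (c * ‖x‖ ^ 2))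
    + xzE ζ x ^ n * (2 * c * G1 (c * ‖x‖ ^ 2) + (2 * c * x j) ^ 2 * G2 (c * ‖x‖ ^ 2))

lemma psi0_deriv (ζ : ℂ) (n : ℕ) (G G1 : ℝ → ℝ) (hG : ∀ s, HasDerivAt G (G1 s) s) (c : ℝ)
    (j : Fin 3) (x : E3) :
    HasLineDerivAt ℝ (psi0 ζ n G c) (psi1 ζ n G G1 c j x) x (EuclideanSpace.single j 1) :=
  (hasLineDerivAt_xz_pow ζ n x j).cmul (hasLineDerivAt_radial G G1 hG c x j)

lemma hasLineDerivAt_cconst (a : ℂ) (x v : E3) : HasLineDerivAt ℝ (fun _ : E3 => a) 0 x v := by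
  unfold HasLineDerivAt
  exact hasDerivAt_const _ _

lemma psi1_deriv (ζ : ℂ) (n : ℕ) (G G1 G2 : ℝ → ℝ) (hG : ∀ s, HasDerivAt G (G1 s) s)
    (hG1 : ∀ s, HasDerivAt G1 (G2 s) s) (c : ℝ)
    (j : Fin 3) (x : E3) :
    HasLineDerivAt ℝ (psi1 ζ n G G1 c j) (psi2 ζ n G G1 G2 c j x) x
      (EuclideanSpace.single j 1) := by
  have hA := (((hasLineDerivAt_cconst (n : ℂ) x _).cmul
    (hasLineDerivAt_xz_pow ζ (n - 1) x j)).cmul (hasLineDerivAt_cconst (vvE ζ j) x _)).cmul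
    (hasLineDerivAt_radial G G1 hG c x j)
  have hB := (hasLineDerivAt_xz_pow ζ n x j).cmul
    (((hasLineDerivAt_cconst (2 * c : ℂ) x _).cmul (hasLineDerivAt_coord x j)).cmul
    (hasLineDerivAt_radial G1 G2 hG1 c x j))
  refine (HasDerivAt.add hA hB).congr_deriv ?_
  simp only [psi2]
  ring

lemma psi2_sum (ζ : ℂ) (n : ℕ) (G G1 G2 : ℝ → ℝ) (c : ℝ) (x : E3) :
    ∑ j, psi2 ζ n G G1 G2 c j x = xzE ζ x ^ n * (c * ((4 * n + 6) * G1 (c * ‖x‖ ^ 2)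
      + 4 * (c * ‖x‖ ^ 2 : ℝ) * G2 (c * ‖x‖ ^ 2))) := by
  have h1 := vvE_null ζ
  have h2 := vvE_sum ζ x
  have h3 := normsq_sum x
  have h4 : (n : ℂ) * xzE ζ x ^ (n - 1) * xzE ζ x = n * xzE ζ x ^ n := by
    cases n with
    | zero => simp
    | succ k => simp [pow_succ]; ring
  simp only [psi2, Fin.sum_univ_three] at *
  push_cast at h3 ⊢
  generalize xzE ζ x ^ (n - 1) = A at *
  generalize xzE ζ x ^ (n - 1 - 1) = B at *
  generalize xzE ζ x ^ n = D at *
  generalize ((n - 1 : ℕ) : ℂ) = N at *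
  generalize (G1 (c * ‖x‖ ^ 2) : ℂ) = g1 at *
  generalize (G2 (c * ‖x‖ ^ 2) : ℂ) = g2 at *
  generalize (G (c * ‖x‖ ^ 2) : ℂ) = g0 at *
  linear_combination (n * N * B * g0) * h1 + (4 * n * A * c * g1) * h2 + (4 * c * g1) * h4
    + (4 * D * c ^ 2 * g2) * h3

@[fun_prop]
lemma xzE_cont (ζ : ℂ) : Continuous (xzE ζ) := by
  unfold xzE
  fun_prop

lemma xzE_smul (ζ : ℂ) (r : ℝ) (x : E3) : xzE ζ (r • x) = r * xzE ζ x := by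
  simp [xzE]; ring

lemma integrable_of_zero {f : E3 → ℂ} (hf : Continuous f) (R : ℝ)
    (h : ∀ x : E3, R < ‖x‖ → f x = 0) : Integrable f := by
  apply hf.integrable_of_hasCompactSupport
  apply HasCompactSupport.intro (isCompact_closedBall (0 : E3) R)
  intro x hx
  apply h
  simpa using hx

lemma ibp_one (f f' g g' : E3 → ℂ) (v : E3) (R : ℝ) (hf : Continuous f) (hf' : Continuous f')
    (hg : Continuous g) (hg' : Continuous g') (h0 : ∀ x : E3, R < ‖x‖ → g x = 0)
    (h0' : ∀ x : E3, R < ‖x‖ → g' x = 0) (hd : ∀ x, HasLineDerivAt ℝ f (f' x) x v)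
    (hd' : ∀ x, HasLineDerivAt ℝ g (g' x) x v) :
    ∫ x, f x * g' x = - ∫ x, f' x * g x := by
  refine integral_bilinear_hasLineDerivAt_right_eq_neg_left_of_integrable
    (B := ContinuousLinearMap.mul ℝ ℂ) (v := v) (f := f) (f' := f') (g := g) (g' := g')
    ?_ ?_ ?_ (fun x _ => hd x) (fun x _ => hd' x)
  · exact integrable_of_zero (hf'.mul hg) R fun x hx => by simp [h0 x hx]
  · exact integrable_of_zero (hf.mul hg') R fun x hx => by simp [h0' x hx]
  · exact integrable_of_zero (hf.mul hg) R fun x hx => by simp [h0 x hx]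

lemma hasLineDerivAt_ofReal (f : E3 → ℝ) (hf : Differentiable ℝ f) (j : Fin 3) (x : E3) :
    HasLineDerivAt ℝ (fun y => (f y : ℂ)) (pdER j f x : ℂ) x (EuclideanSpace.single j 1) := by
  have h := (hf x).hasFDerivAt.hasLineDerivAt (EuclideanSpace.single j 1)
  unfold HasLineDerivAt at *
  exact h.ofReal_comp

lemma pdER_contDiff (f : E3 → ℝ) (hf : ContDiff ℝ (⊤ : ℕ∞) f) (j : Fin 3) :
    ContDiff ℝ (⊤ : ℕ∞) (pdER j f) := by
  unfold pdER
  exact (hf.fderiv_right (m := (⊤ : ℕ∞)) (by simp)).clm_apply contDiff_const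

/-- Integration by parts twice. -/
lemma ibp_two (φ : E3 → ℝ) (hφ : ContDiff ℝ (⊤ : ℕ∞) φ) (j : Fin 3) (g g' g'' : E3 → ℂ) (R : ℝ)
    (hg : Continuous g) (hg' : Continuous g') (hg'' : Continuous g'')
    (h0 : ∀ x : E3, R < ‖x‖ → g x = 0)
    (h0' : ∀ x : E3, R < ‖x‖ → g' x = 0) (h0'' : ∀ x : E3, R < ‖x‖ → g'' x = 0)
    (hd : ∀ x, HasLineDerivAt ℝ g (g' x) x (EuclideanSpace.single j 1))
    (hd' : ∀ x, HasLineDerivAt ℝ g' (g'' x) x (EuclideanSpace.single j 1)) :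
    ∫ x, (φ x : ℂ) * g'' x = ∫ x, (pdER j (fun y => pdER j φ y) x : ℂ) * g x := by
  have c1 := pdER_contDiff φ hφ j
  have c2 := pdER_contDiff _ c1 j
  have e1 := ibp_one (fun x => (φ x : ℂ)) (fun x => (pdER j φ x : ℂ)) g' g''
    (EuclideanSpace.single j 1) R (Complex.continuous_ofReal.comp hφ.continuous)
    (Complex.continuous_ofReal.comp c1.continuous) hg' hg'' h0' h0''
    (hasLineDerivAt_ofReal φ (hφ.differentiable (by simp)) j) hd'
  have e2 := ibp_one (fun x => (pdER j φ x : ℂ))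
    (fun x => (pdER j (fun y => pdER j φ y) x : ℂ)) g g'
    (EuclideanSpace.single j 1) R (Complex.continuous_ofReal.comp c1.continuous)
    (Complex.continuous_ofReal.comp c2.continuous) hg hg' h0 h0'
    (hasLineDerivAt_ofReal _ (c1.differentiable (by simp)) j) hd
  rw [e1, e2, neg_neg]

/-- A smooth cutoff. -/
lemma exists_cutoff : ∃ G G1 G2 : ℝ → ℝ, (∀ s, HasDerivAt G (G1 s) s) ∧
    (∀ s, HasDerivAt G1 (G2 s) s) ∧ Continuous G2 ∧ (∀ s, s ≤ 1 → G s = 1) ∧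
    (∀ s, 2 < s → G s = 0) ∧ (∀ s, |G s| ≤ 1) ∧ (∀ s, s < 1 → G1 s = 0) ∧
    (∀ s, 2 < s → G1 s = 0) ∧ (∀ s, s < 1 → G2 s = 0) ∧ (∀ s, 2 < s → G2 s = 0) := by
  let G : ℝ → ℝ := fun s => Real.smoothTransition (2 - s)
  have hG : ContDiff ℝ (⊤ : ℕ∞) G :=
    Real.smoothTransition.contDiff.comp (contDiff_const.sub contDiff_id)
  have hG1 : ContDiff ℝ (⊤ : ℕ∞) (deriv G) := (contDiff_infty_iff_deriv.1 hG).2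
  have hG2 : ContDiff ℝ (⊤ : ℕ∞) (deriv (deriv G)) := (contDiff_infty_iff_deriv.1 hG1).2
  have o1 : ∀ s, s ≤ 1 → G s = 1 := fun s hs =>
    Real.smoothTransition.one_of_one_le (by linarith)
  have z1 : ∀ s, 2 < s → G s = 0 := fun s hs =>
    Real.smoothTransition.zero_of_nonpos (by linarith)
  have o2 : ∀ s, s < 1 → deriv G s = 0 := fun s hs => by
    have : G =ᶠ[nhds s] fun _ => 1 := by
      filter_upwards [Iio_mem_nhds hs] with t ht using o1 t (le_of_lt ht)
    rw [this.deriv_eq]; simp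
  have z2 : ∀ s, 2 < s → deriv G s = 0 := fun s hs => by
    have : G =ᶠ[nhds s] fun _ => 0 := by
      filter_upwards [Ioi_mem_nhds hs] with t ht using z1 t ht
    rw [this.deriv_eq]; simp
  have o3 : ∀ s, s < 1 → deriv (deriv G) s = 0 := fun s hs => by
    have : deriv G =ᶠ[nhds s] fun _ => 0 := by
      filter_upwards [Iio_mem_nhds hs] with t ht using o2 t ht
    rw [this.deriv_eq]; simp
  have z3 : ∀ s, 2 < s → deriv (deriv G) s = 0 := fun s hs => by
    have : deriv G =ᶠ[nhds s] fun _ => 0 := by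
      filter_upwards [Ioi_mem_nhds hs] with t ht using z2 t ht
    rw [this.deriv_eq]; simp
  refine ⟨G, deriv G, deriv (deriv G), fun s => ?_, fun s => ?_, hG2.continuous, o1, z1,
    fun s => ?_, o2, z2, o3, z3⟩
  · exact (hG.differentiable (by simp) s).hasDerivAt
  · exact (hG1.differentiable (by simp) s).hasDerivAt
  · rw [abs_of_nonneg (Real.smoothTransition.nonneg _)]
    exact Real.smoothTransition.le_one _

/-- Green's identity against the cutoff moment. -/
lemma green (ρ φ : E3 → ℝ) (hρ : Continuous ρ) (hφ : ContDiff ℝ (⊤ : ℕ∞) φ)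
    (hpoisson : ∀ x, ∑ j : Fin 3, pdER j (fun y => pdER j φ y) x = -ρ x)
    (G G1 G2 : ℝ → ℝ) (hG : ∀ s, HasDerivAt G (G1 s) s)
    (hG1 : ∀ s, HasDerivAt G1 (G2 s) s) (hG2 : Continuous G2)
    (z0 : ∀ s, 2 < s → G s = 0) (z1 : ∀ s, 2 < s → G1 s = 0) (z2 : ∀ s, 2 < s → G2 s = 0)
    (ζ : ℂ) (n : ℕ) (c : ℝ) (hc : 0 < c) :
    ∫ x, (ρ x : ℂ) * (xzE ζ x ^ n * (G (c * ‖x‖ ^ 2) : ℂ)) =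
      - ∫ x, (φ x : ℂ) * (xzE ζ x ^ n * (c * ((4 * n + 6) * G1 (c * ‖x‖ ^ 2)
      + 4 * (c * ‖x‖ ^ 2 : ℝ) * G2 (c * ‖x‖ ^ 2)))) := by
  have cG : Continuous G := continuous_iff_continuousAt.2 fun s => (hG s).continuousAt
  have cG1 : Continuous G1 := continuous_iff_continuousAt.2 fun s => (hG1 s).continuousAt
  have k0 : Continuous (psi0 ζ n G c) := by unfold psi0; fun_prop
  have k1 : ∀ j, Continuous (psi1 ζ n G G1 c j) := by intro j; unfold psi1; fun_prop
  have k2 : ∀ j, Continuous (psi2 ζ n G G1 G2 c j) := by intro j; unfold psi2; fun_prop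
  have hR : ∀ x : E3, Real.sqrt (2 / c) < ‖x‖ → 2 < c * ‖x‖ ^ 2 := by
    intro x hx
    have := (Real.sqrt_lt' (lt_of_le_of_lt (Real.sqrt_nonneg _) hx)).1 hx
    rw [div_lt_iff₀ hc] at this
    linarith
  have l0 : ∀ x : E3, Real.sqrt (2 / c) < ‖x‖ → psi0 ζ n G c x = 0 := fun x hx => by
    simp [psi0, z0 _ (hR x hx)]
  have l1 : ∀ j, ∀ x : E3, Real.sqrt (2 / c) < ‖x‖ → psi1 ζ n G G1 c j x = 0 := fun j x hx => by
    simp [psi1, z0 _ (hR x hx), z1 _ (hR x hx)]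
  have l2 : ∀ j, ∀ x : E3, Real.sqrt (2 / c) < ‖x‖ → psi2 ζ n G G1 G2 c j x = 0 :=
    fun j x hx => by simp [psi2, z0 _ (hR x hx), z1 _ (hR x hx), z2 _ (hR x hx)]
  have key := fun j => ibp_two φ hφ j (psi0 ζ n G c) (psi1 ζ n G G1 c j) (psi2 ζ n G G1 G2 c j)
    _ k0 (k1 j) (k2 j) l0 (l1 j) (l2 j) (psi0_deriv ζ n G G1 hG c j)
    (psi1_deriv ζ n G G1 G2 hG hG1 c j)
  have s := Finset.sum_congr (rfl : (Finset.univ : Finset (Fin 3)) = Finset.univ)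
    (fun j _ => key j)
  rw [← integral_finsetSum, ← integral_finsetSum] at s
  · simp only [← Finset.mul_sum, ← Finset.sum_mul, psi2_sum] at s
    rw [s, ← integral_neg]
    congr 1
    ext x
    have := hpoisson x
    rw [← Complex.ofReal_sum, this]
    simp [psi0]
  · intro j _
    have c2 := pdER_contDiff _ (pdER_contDiff φ hφ j) j
    exact integrable_of_zero ((Complex.continuous_ofReal.comp c2.continuous).mul k0)
      (Real.sqrt (2 / c))
      fun x hx => by simp [l0 x hx]
  · intro j _
    exact integrable_of_zero ((Complex.continuous_ofReal.comp hφ.continuous).mul (k2 j))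
      (Real.sqrt (2 / c))
      fun x hx => by simp [l2 j x hx]

/-- The integral of a product of an angular and a radial function. -/
lemma polar_s3 (A : E3 → ℂ) (B : ℝ → ℂ) :
    ∫ y : E3, A (‖y‖⁻¹ • y) * B ‖y‖ =
      (∫ n : Metric.sphere (0 : E3) 1, A n ∂((volume : Measure E3).toSphere)) *
        ∫ r in Set.Ioi (0 : ℝ), (r : ℂ) ^ 2 * B r := by
  have hd : Module.finrank ℝ E3 - 1 = 2 := by simp
  calc
    ∫ y : E3, A (‖y‖⁻¹ • y) * B ‖y‖
      = ∫ x : ({(0)}ᶜ : Set E3), A (‖x.1‖⁻¹ • x.1) * B ‖x.1‖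
          ∂((volume : Measure E3).comap Subtype.val) := by
      rw [integral_subtype_comap (measurableSet_singleton _).compl
        fun y : E3 => A (‖y‖⁻¹ • y) * B ‖y‖, restrict_compl_singleton]
    _ = ∫ z : Metric.sphere (0 : E3) 1 × Set.Ioi (0 : ℝ), A z.1 * B z.2
          ∂(volume : Measure E3).toSphere.prod (.volumeIoiPow (Module.finrank ℝ E3 - 1)) := by
      simpa using (volume : Measure E3).measurePreserving_homeomorphUnitSphereProd.integral_comp
        (Homeomorph.measurableEmbedding _)
        (fun z : Metric.sphere (0 : E3) 1 × Set.Ioi (0 : ℝ) => A z.1 * B z.2)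
    _ = (∫ n : Metric.sphere (0 : E3) 1, A n ∂((volume : Measure E3).toSphere)) *
          ∫ r : Set.Ioi (0 : ℝ), B r ∂.volumeIoiPow (Module.finrank ℝ E3 - 1) :=
      integral_prod_mul (fun n : Metric.sphere (0 : E3) 1 => A n)
        (fun r : Set.Ioi (0 : ℝ) => B r)
    _ = _ := by
      rw [hd]
      congr 1
      simp only [Measure.volumeIoiPow, ENNReal.ofReal]
      rw [integral_withDensity_eq_integral_smul,
        integral_subtype_comap measurableSet_Ioi fun r : ℝ => Real.toNNReal (r ^ 2) • B r]
      · refine setIntegral_congr_fun measurableSet_Ioi fun r hr => ?_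
        have : (0 : ℝ) ≤ r ^ 2 := by positivity
        simp [NNReal.smul_def, Real.coe_toNNReal _ this]
      · exact (measurable_subtype_coe.pow_const _).real_toNNReal

/-- Radial weight. -/
noncomputable def wR (n : ℕ) (G1 G2 : ℝ → ℝ) (r : ℝ) : ℂ :=
  (4 * n + 6) * G1 (r ^ 2) + 4 * (r ^ 2 : ℝ) * G2 (r ^ 2)

lemma wR_integral (n : ℕ) (G G1 G2 : ℝ → ℝ) (hG : ∀ s, HasDerivAt G (G1 s) s)
    (hG1 : ∀ s, HasDerivAt G1 (G2 s) s) (hG2 : Continuous G2) (o0 : ∀ s, s ≤ 1 → G s = 1)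
    (z0 : ∀ s, 2 < s → G s = 0) (z1 : ∀ s, 2 < s → G1 s = 0) (z2 : ∀ s, 2 < s → G2 s = 0) :
    ∫ r in Set.Ioi (0 : ℝ), (r : ℂ) * wR n G1 G2 r = -(2 * n + 1) := by
  have cG1 : Continuous G1 := continuous_iff_continuousAt.2 fun s => (hG1 s).continuousAt
  have hr : ∀ r : ℝ, 2 < r → 2 < r ^ 2 := fun r hr => by nlinarith
  let F : ℝ → ℝ := fun r => (2 * n + 1) * G (r ^ 2) + 2 * r ^ 2 * G1 (r ^ 2)
  let F' : ℝ → ℝ := fun r => r * ((4 * n + 6) * G1 (r ^ 2) + 4 * r ^ 2 * G2 (r ^ 2))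
  have hF : ∀ r, HasDerivAt F (F' r) r := by
    intro r
    have hq : HasDerivAt (fun r : ℝ => r ^ 2) (2 * r) r := by simpa using hasDerivAt_pow 2 r
    have h1 := (HasDerivAt.comp r (hG (r ^ 2)) hq).const_mul (2 * n + 1 : ℝ)
    have h2 := (hq.const_mul 2).mul (HasDerivAt.comp r (hG1 (r ^ 2)) hq)
    refine (h1.add h2).congr_deriv ?_
    simp only [F', Function.comp]
    ring
  have hFint : Integrable F' := by
    apply Continuous.integrable_of_hasCompactSupport
    · simp only [F']; fun_prop
    · apply HasCompactSupport.intro (isCompact_closedBall (0 : ℝ) 2)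
      intro x hx
      have hx' : 2 < |x| := by simpa using hx
      have : 2 < x ^ 2 := by rw [← sq_abs]; exact hr _ hx'
      simp [F', z1 _ this, z2 _ this]
  have hlim : Tendsto F atTop (nhds 0) := by
    apply tendsto_const_nhds.congr'
    filter_upwards [eventually_gt_atTop 2] with r h2
    simp [F, z0 _ (hr r h2), z1 _ (hr r h2)]
  have := integral_Ioi_of_hasDerivAt_of_tendsto' (a := 0) (fun r _ => hF r)
    hFint.integrableOn hlim
  have e : ∀ r : ℝ, (r : ℂ) * wR n G1 G2 r = ((F' r : ℝ) : ℂ) := by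
    intro r; simp [wR, F']
  simp only [e]
  rw [integral_complex_ofReal, this]
  simp [F, o0 0 (by norm_num)]

lemma evalP_cont (P : MvPolynomial (Fin 3) ℂ) : Continuous (evalP P) := by
  unfold evalP
  exact (MvPolynomial.continuous_eval P).comp (by fun_prop)

/-- If a polynomial converges along the naturals, the limit is its constant term. -/
lemma poly_limit (n : ℕ) (b : ℕ → ℂ) (L : ℂ)
    (h : Tendsto (fun N : ℕ => ∑ m ∈ Finset.range (n + 1), ((N : ℂ) + 1) ^ (n - m) * b m) atTop
      (nhds L)) : b n = L := by
  let Q : Polynomial ℂ := ∑ m ∈ Finset.range (n + 1), Polynomial.C (b m) * Polynomial.X ^ (n - m)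
  have hQ : ∀ z, Q.eval z = ∑ m ∈ Finset.range (n + 1), z ^ (n - m) * b m := by
    intro z
    simp only [Q, Polynomial.eval_finsetSum, Polynomial.eval_mul, Polynomial.eval_C,
      Polynomial.eval_pow, Polynomial.eval_X]
    exact Finset.sum_congr rfl fun m _ => mul_comm _ _
  have hQ0 : Q.eval 0 = b n := by
    rw [hQ, Finset.sum_eq_single n]
    · simp
    · intro m hm hmn
      have : n - m ≠ 0 := by have := Finset.mem_range.1 hm; omega
      simp [this]
    · simp
  have h' : Tendsto (fun N : ℕ => Q.eval ((N : ℂ) + 1)) atTop (nhds L) := by simpa [hQ] using h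
  have hdeg : ¬ 0 < Q.degree := by
    intro hd
    have hz : Tendsto (fun N : ℕ => ‖(N : ℂ) + 1‖) atTop atTop := by
      have : ∀ N : ℕ, ‖(N : ℂ) + 1‖ = (N : ℝ) + 1 := fun N => by
        rw [← Nat.cast_succ, Complex.norm_natCast]; simp
      simp only [this]
      exact tendsto_atTop_add_const_right _ _ tendsto_natCast_atTop_atTop
    exact not_tendsto_atTop_of_tendsto_nhds h'.norm (Q.tendsto_norm_atTop hd hz)
  have hC := Polynomial.eq_C_of_degree_le_zero (not_lt.1 hdeg)
  have hc : ∀ z, Q.eval z = b n := by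
    intro z
    rw [← hQ0]
    rw [hC]; simp
  simp only [hc] at h'
  exact tendsto_nhds_unique tendsto_const_nhds h'

/-- Scaled form of Green's identity. -/
lemma green_scaled (ρ φ : E3 → ℝ) (hρ : Continuous ρ) (hφ : ContDiff ℝ (⊤ : ℕ∞) φ)
    (hpoisson : ∀ x, ∑ j : Fin 3, pdER j (fun y => pdER j φ y) x = -ρ x)
    (G G1 G2 : ℝ → ℝ) (hG : ∀ s, HasDerivAt G (G1 s) s)
    (hG1 : ∀ s, HasDerivAt G1 (G2 s) s) (hG2 : Continuous G2)
    (z0 : ∀ s, 2 < s → G s = 0) (z1 : ∀ s, 2 < s → G1 s = 0) (z2 : ∀ s, 2 < s → G2 s = 0)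
    (ζ : ℂ) (n : ℕ) (R : ℝ) (hR : 0 < R) :
    ∫ x, (ρ x : ℂ) * (xzE ζ x ^ n * (G ((R ^ 2)⁻¹ * ‖x‖ ^ 2) : ℂ)) =
      - ((R : ℂ) ^ (n + 1) * ∫ y : E3, (φ (R • y) : ℂ) * (xzE ζ y ^ n * wR n G1 G2 ‖y‖)) := by
  rw [green ρ φ hρ hφ hpoisson G G1 G2 hG hG1 hG2 z0 z1 z2 ζ n (R ^ 2)⁻¹ (by positivity)]
  congr 1
  have hs := Measure.integral_comp_smul (volume : Measure E3)
    (fun x : E3 => (φ x : ℂ) * (xzE ζ x ^ n * (((R ^ 2)⁻¹ : ℝ) * ((4 * n + 6) *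
      G1 ((R ^ 2)⁻¹ * ‖x‖ ^ 2)
      + 4 * ((R ^ 2)⁻¹ * ‖x‖ ^ 2 : ℝ) * G2 ((R ^ 2)⁻¹ * ‖x‖ ^ 2))))) R
  have hRc : (R : ℂ) ≠ 0 := by exact_mod_cast hR.ne'
  have hp : (0 : ℝ) < (R ^ 3)⁻¹ := by positivity
  have e : ∀ y : E3, (R ^ 2)⁻¹ * ‖R • y‖ ^ 2 = ‖y‖ ^ 2 := by
    intro y
    rw [norm_smul, Real.norm_of_nonneg hR.le]
    field_simp
  have e2 : ∀ y : E3, (φ (R • y) : ℂ) * (xzE ζ (R • y) ^ n * (((R ^ 2)⁻¹ : ℝ) * ((4 * n + 6) *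
      G1 (‖y‖ ^ 2) + 4 * (‖y‖ ^ 2 : ℝ) * G2 (‖y‖ ^ 2)))) =
      ((R : ℂ) ^ n * ((R : ℂ) ^ 2)⁻¹) *
        ((φ (R • y) : ℂ) * (xzE ζ y ^ n * wR n G1 G2 ‖y‖)) := by
    intro y
    rw [xzE_smul, wR]
    push_cast
    ring
  simp only [e, e2] at hs
  rw [integral_const_mul] at hs
  simp only [finrank_euclideanSpace, Fintype.card_fin, abs_of_pos hp, Complex.real_smul] at hs
  push_cast at hs ⊢
  field_simp at hs
  field_simp
  linear_combination -hs

lemma xzE_bound (ζ : ℂ) (x : E3) : ‖xzE ζ x‖ ≤ (∑ j, ‖vvE ζ j‖) * ‖x‖ := by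
  rw [← vvE_sum, Finset.sum_mul]
  refine (norm_sum_le _ _).trans (Finset.sum_le_sum fun j _ => ?_)
  rw [norm_mul, Complex.norm_real]
  gcongr
  exact PiLp.norm_apply_le x j

lemma moment_integrable (ρ : E3 → ℝ) (hρ : Continuous ρ) (C a : ℝ) (hC : 0 < C) (ha : 0 < a)
    (hbound : ∀ x, |ρ x| ≤ C * Real.exp (-a * ‖x‖)) (ζ : ℂ) (n : ℕ) :
    Integrable (fun x : E3 => (ρ x : ℂ) * xzE ζ x ^ n) := by
  set M := ∑ j, ‖vvE ζ j‖ with hM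
  have hM0 : 0 ≤ M := Finset.sum_nonneg fun j _ => norm_nonneg _
  have hi : Integrable (fun x : E3 => (1 + ‖x‖) ^ (-(4 : ℝ))) :=
    integrable_one_add_norm (by simp; norm_num)
  refine (hi.const_mul (C * M ^ n * ((n + 4).factorial * Real.exp a / a ^ (n + 4)))).mono' ?_ ?_
  · apply Continuous.aestronglyMeasurable
    fun_prop
  refine Eventually.of_forall fun x => ?_
  rw [norm_mul, norm_pow, Complex.norm_real, Real.norm_eq_abs]
  set r := ‖x‖ with hr
  have hr0 : 0 ≤ r := norm_nonneg _
  have h1 : ‖xzE ζ x‖ ^ n ≤ M ^ n * (1 + r) ^ n := by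
    rw [← mul_pow]
    gcongr
    refine (xzE_bound ζ x).trans ?_
    gcongr
    linarith
  have h2 := Real.pow_div_factorial_le_exp (a * (1 + r)) (by positivity) (n + 4)
  rw [div_le_iff₀ (by positivity), mul_pow] at h2
  have h3 : Real.exp (-a * r) * (1 + r) ^ n ≤
      ((n + 4).factorial * Real.exp a / a ^ (n + 4)) * (1 + r) ^ (-(4 : ℝ)) := by
    have e4 : (1 + r) ^ (-(4 : ℝ)) = ((1 + r) ^ 4)⁻¹ := by
      rw [Real.rpow_neg (by positivity)]
      norm_cast
    rw [e4, ← div_eq_mul_inv, le_div_iff₀ (by positivity), le_div_iff₀ (by positivity)]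
    have e5 : Real.exp (a * (1 + r)) * Real.exp (-a * r) = Real.exp a := by
      rw [← Real.exp_add]; ring_nf
    calc Real.exp (-a * r) * (1 + r) ^ n * (1 + r) ^ 4 * a ^ (n + 4)
        = (a ^ (n + 4) * (1 + r) ^ (n + 4)) * Real.exp (-a * r) := by ring
      _ ≤ (Real.exp (a * (1 + r)) * (n + 4).factorial) * Real.exp (-a * r) := by gcongr
      _ = (n + 4).factorial * Real.exp a := by rw [← e5]; ring
  calc |ρ x| * ‖xzE ζ x‖ ^ n ≤ (C * Real.exp (-a * r)) * (M ^ n * (1 + r) ^ n) := by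
        gcongr
        exact hbound x
    _ = C * M ^ n * (Real.exp (-a * r) * (1 + r) ^ n) := by ring
    _ ≤ C * M ^ n * (((n + 4).factorial * Real.exp a / a ^ (n + 4)) * (1 + r) ^ (-(4 : ℝ))) := by
        gcongr
    _ = _ := by ring

lemma moment_tendsto (f : E3 → ℂ) (hf : Integrable f)
    (G : ℝ → ℝ) (hG : Continuous G) (o0 : ∀ s, s ≤ 1 → G s = 1) (b0 : ∀ s, |G s| ≤ 1) :
    Tendsto (fun N : ℕ => ∫ x, f x * (G ((((N : ℝ) + 1) ^ 2)⁻¹ * ‖x‖ ^ 2) : ℂ)) atTop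
      (nhds (∫ x, f x)) := by
  refine tendsto_integral_of_dominated_convergence (fun x => ‖f x‖) ?_ hf.norm ?_ ?_
  · intro N
    refine hf.aestronglyMeasurable.mul (Continuous.aestronglyMeasurable ?_)
    fun_prop
  · intro N
    refine Eventually.of_forall fun x => ?_
    rw [norm_mul, Complex.norm_real]
    exact mul_le_of_le_one_right (norm_nonneg _) (b0 _)
  · refine Eventually.of_forall fun x => ?_
    apply tendsto_const_nhds.congr'
    obtain ⟨k, hk⟩ := exists_nat_ge ‖x‖
    filter_upwards [eventually_ge_atTop k] with N hN
    have hN' : (k : ℝ) ≤ N := by exact_mod_cast hN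
    rw [o0]
    · simp
    · rw [inv_mul_le_iff₀ (by positivity), mul_one]
      have := norm_nonneg x
      gcongr
      linarith

lemma wR_zero (n : ℕ) (G1 G2 : ℝ → ℝ) (o1 : ∀ s, s < 1 → G1 s = 0) (o2 : ∀ s, s < 1 → G2 s = 0)
    (r : ℝ) (h0 : 0 ≤ r) (h1 : r < 1) : wR n G1 G2 r = 0 := by
  have : r ^ 2 < 1 := by nlinarith
  simp [wR, o1 _ this, o2 _ this]

lemma wR_zero' (n : ℕ) (G1 G2 : ℝ → ℝ) (o1 : ∀ s, 2 < s → G1 s = 0) (o2 : ∀ s, 2 < s → G2 s = 0)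
    (r : ℝ) (h1 : 2 < r) : wR n G1 G2 r = 0 := by
  have : 2 < r ^ 2 := by nlinarith
  simp [wR, o1 _ this, o2 _ this]

/-- The `m`-th multipole term. -/
noncomputable def termS (p : ℕ → MvPolynomial (Fin 3) ℂ) (m : ℕ) (x : E3) : ℂ :=
  evalP (p m) (‖x‖⁻¹ • x) / (‖x‖ : ℂ) ^ (m + 1)

lemma termS_smul (p : ℕ → MvPolynomial (Fin 3) ℂ) (m : ℕ) (R : ℝ) (hR : 0 < R) (y : E3) :
    termS p m (R • y) = ((R : ℂ) ^ (m + 1))⁻¹ * termS p m y := by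
  have e : ‖R • y‖⁻¹ • (R • y) = ‖y‖⁻¹ • y := by
    rw [norm_smul, Real.norm_of_nonneg hR.le, smul_smul]
    congr 1
    field_simp
  rw [termS, e, termS, norm_smul, Real.norm_of_nonneg hR.le]
  push_cast
  rw [mul_pow, div_eq_mul_inv, div_eq_mul_inv, mul_inv]
  ring

lemma termS_integrable (p : ℕ → MvPolynomial (Fin 3) ℂ) (m : ℕ) (g : E3 → ℂ) (hg : Continuous g)
    (h1 : ∀ x : E3, ‖x‖ < 1 → g x = 0) (h2 : ∀ x : E3, 2 < ‖x‖ → g x = 0) :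
    Integrable (fun x => termS p m x * g x) := by
  have e : (fun x => termS p m x * g x) = fun x : E3 =>
      (evalP (p m) ((max ‖x‖ 1)⁻¹ • x) / ((max ‖x‖ 1 : ℝ) : ℂ) ^ (m + 1)) * g x := by
    ext x
    rcases lt_or_ge ‖x‖ 1 with h | h
    · simp [h1 x h]
    · rw [termS, max_eq_left h]
  rw [e]
  have hpos : ∀ x : E3, max ‖x‖ 1 ≠ 0 := fun x => (lt_of_lt_of_le one_pos (le_max_right _ _)).ne'
  have hm : Continuous (fun x : E3 => max ‖x‖ 1) := by fun_prop
  refine integrable_of_zero (Continuous.mul (Continuous.div ?_ ?_ ?_) hg) 2 fun x hx => by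
    simp [h2 x hx]
  · exact (evalP_cont (p m)).comp ((hm.inv₀ hpos).smul continuous_id)
  · exact (Complex.continuous_ofReal.comp hm).pow _
  · intro x
    exact pow_ne_zero _ (by exact_mod_cast hpos x)

/-- Insertion of the multipole expansion. -/
lemma expansion_tendsto (φ : E3 → ℝ) (hφ : Continuous φ) (p : ℕ → MvPolynomial (Fin 3) ℂ) (n : ℕ)
    (hexp : (fun x : E3 => (φ x : ℂ) - ∑ m ∈ Finset.range (n + 1), termS p m x)
        =O[cocompact E3] fun x => ‖x‖ ^ (-(n : ℝ) - 2))
    (g : E3 → ℂ) (hg : Continuous g)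
    (h1 : ∀ x : E3, ‖x‖ < 1 → g x = 0) (h2 : ∀ x : E3, 2 < ‖x‖ → g x = 0) :
    Tendsto (fun N : ℕ => (((N : ℝ) + 1 : ℝ) : ℂ) ^ (n + 1) *
        (∫ y : E3, (φ (((N : ℝ) + 1) • y) : ℂ) * g y)
        - ∑ m ∈ Finset.range (n + 1), ((N : ℂ) + 1) ^ (n - m) * ∫ y, termS p m y * g y)
      atTop (nhds 0) := by
  obtain ⟨C, hC, hbd⟩ := hexp.exists_nonneg
  have hev := hbd.bound
  rw [← Metric.cobounded_eq_cocompact, ← comap_norm_atTop, eventually_comap] at hev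
  obtain ⟨r0, hr0⟩ := eventually_atTop.1 hev
  have gi : Integrable g := integrable_of_zero hg 2 h2
  have lim : Tendsto (fun N : ℕ => (C * ∫ y, ‖g y‖) * (1 / ((N : ℝ) + 1))) atTop (nhds 0) := by
    simpa using tendsto_one_div_add_atTop_nhds_zero_nat.const_mul (C * ∫ y, ‖g y‖)
  apply squeeze_zero_norm' _ lim
  obtain ⟨k, hk⟩ := exists_nat_ge r0
  filter_upwards [eventually_ge_atTop k] with N hN
  have hRr : r0 ≤ (N : ℝ) + 1 := by
    have : (k : ℝ) ≤ N := by exact_mod_cast hN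
    linarith
  have hNc : ((N : ℂ) + 1) = (((N : ℝ) + 1 : ℝ) : ℂ) := by push_cast; rfl
  rw [hNc]
  have hR : 0 < (N : ℝ) + 1 := by positivity
  generalize (N : ℝ) + 1 = R at *
  have hRc : (R : ℂ) ≠ 0 := by exact_mod_cast hR.ne'
  have iφ : Integrable (fun y : E3 => (φ (R • y) : ℂ) * g y) :=
    integrable_of_zero (by fun_prop) 2 fun x hx => by simp [h2 x hx]
  have iS : ∀ m ∈ Finset.range (n + 1), Integrable (fun y : E3 => termS p m (R • y) * g y) := by
    intro m _
    simp only [termS_smul p m R hR, mul_assoc]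
    exact (termS_integrable p m g hg h1 h2).const_mul _
  have key : (R : ℂ) ^ (n + 1) * (∫ y : E3, (φ (R • y) : ℂ) * g y)
        - ∑ m ∈ Finset.range (n + 1), (R : ℂ) ^ (n - m) * ∫ y, termS p m y * g y
      = (R : ℂ) ^ (n + 1) * ∫ y : E3,
        ((φ (R • y) : ℂ) - ∑ m ∈ Finset.range (n + 1), termS p m (R • y)) * g y := by
    simp only [sub_mul, Finset.sum_mul]
    rw [integral_sub iφ (integrable_finsetSum _ iS), integral_finsetSum _ iS, mul_sub,
      Finset.mul_sum]
    congr 1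
    refine Finset.sum_congr rfl fun m hm => ?_
    simp only [termS_smul p m R hR, mul_assoc]
    rw [integral_const_mul, ← mul_assoc]
    congr 1
    have hm' : m ≤ n := Nat.lt_succ_iff.1 (Finset.mem_range.1 hm)
    rw [eq_mul_inv_iff_mul_eq₀ (pow_ne_zero _ hRc), ← pow_add]
    congr 1
    omega
  rw [key, norm_mul, norm_pow, Complex.norm_real, Real.norm_of_nonneg hR.le]
  have est : ‖∫ y : E3, ((φ (R • y) : ℂ) - ∑ m ∈ Finset.range (n + 1), termS p m (R • y)) * g y‖
      ≤ ∫ y, (C * (R ^ (n + 2))⁻¹) * ‖g y‖ := by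
    refine norm_integral_le_of_norm_le (gi.norm.const_mul _) (Eventually.of_forall fun y => ?_)
    rcases lt_or_ge ‖y‖ 1 with h | h
    · simp [h1 y h]
    rw [norm_mul]
    gcongr
    have hny : ‖R • y‖ = R * ‖y‖ := by rw [norm_smul, Real.norm_of_nonneg hR.le]
    have hge : R ≤ ‖R • y‖ := by rw [hny]; exact le_mul_of_one_le_right hR.le h
    refine (hr0 ‖R • y‖ (hRr.trans hge) _ rfl).trans ?_
    gcongr
    rw [Real.norm_of_nonneg (by positivity)]
    have : -(n : ℝ) - 2 = -((n + 2 : ℕ) : ℝ) := by push_cast; ring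
    rw [this, Real.rpow_neg (norm_nonneg _), Real.rpow_natCast]
    gcongr
  calc R ^ (n + 1) * _ ≤ R ^ (n + 1) * ∫ y, (C * (R ^ (n + 2))⁻¹) * ‖g y‖ := by gcongr
    _ = (C * ∫ y, ‖g y‖) * (1 / R) := by
      rw [integral_const_mul]
      field_simp
      ring

lemma termS_integral (p : ℕ → MvPolynomial (Fin 3) ℂ) (n : ℕ) (ζ : ℂ) (w : ℝ → ℂ)
    (hw : w 0 = 0) :
    ∫ y : E3, termS p n y * (xzE ζ y ^ n * w ‖y‖) =
      (∫ x : Metric.sphere (0 : E3) 1, evalP (p n) x * xzE ζ x ^ n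
        ∂((volume : Measure E3).toSphere)) * ∫ r in Set.Ioi (0 : ℝ), (r : ℂ) * w r := by
  have h := polar_s3 (fun x => evalP (p n) x * xzE ζ x ^ n) (fun r => (r : ℂ)⁻¹ * w r)
  have e1 : ∀ y : E3, evalP (p n) (‖y‖⁻¹ • y) * xzE ζ (‖y‖⁻¹ • y) ^ n * ((‖y‖ : ℂ)⁻¹ * w ‖y‖) =
      termS p n y * (xzE ζ y ^ n * w ‖y‖) := by
    intro y
    by_cases hy : y = 0
    · simp [hy, hw]
    have hy' : (‖y‖ : ℂ) ≠ 0 := by exact_mod_cast (norm_ne_zero_iff.2 hy)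
    rw [xzE_smul, termS, mul_pow]
    push_cast
    rw [inv_pow, pow_succ]
    field_simp
  simp only [e1] at h
  rw [h]
  congr 1
  refine setIntegral_congr_fun measurableSet_Ioi fun r hr => ?_
  have : (r : ℂ) ≠ 0 := by exact_mod_cast (ne_of_gt hr)
  change (r : ℂ) ^ 2 * ((r : ℂ)⁻¹ * w r) = (r : ℂ) * w r
  field_simp

/-- If `ρ` is smooth and exponentially decaying, `φ` is smooth with `Δφ = −ρ`, and `φ`
admits a multipole expansion `φ(x) ~ Σ_m p_m(x/|x|)/|x|^{m+1}` (with harmonic homogeneous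
polynomials `p_m`, valid to all orders together with its radial derivative), then the moments
of `ρ` satisfy `∫ ρ(x) x(ζ)^ℓ d³x = (2ℓ+1) ∫_{S²} p_ℓ(n) n(ζ)^ℓ dA(n)`. -/
theorem moments_eq_multipole_coefficients
    (ρ φ : EuclideanSpace ℝ (Fin 3) → ℝ)
    (hρ : ContDiff ℝ (⊤ : ℕ∞) ρ) (hφ : ContDiff ℝ (⊤ : ℕ∞) φ)
    (C a : ℝ) (hC : 0 < C) (ha : 0 < a)
    (hbound : ∀ x, |ρ x| ≤ C * Real.exp (-a * ‖x‖))
    (hpoisson : ∀ x, ∑ j : Fin 3, pdER j (fun y => pdER j φ y) x = -ρ x)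
    (p : ℕ → MvPolynomial (Fin 3) ℂ)
    (hhom : ∀ m, (p m).IsHomogeneous m)
    (hharm : ∀ m x, ∑ j : Fin 3, pdE j (fun y => pdE j (evalP (p m)) y) x = 0)
    (hφexp : ∀ K : ℕ,
      (fun x : EuclideanSpace ℝ (Fin 3) =>
          (φ x : ℂ)
            - ∑ m ∈ Finset.range (K + 1), evalP (p m) (‖x‖⁻¹ • x) / (‖x‖ : ℂ) ^ (m + 1))
        =O[cocompact (EuclideanSpace ℝ (Fin 3))] fun x => ‖x‖ ^ (-(K : ℝ) - 2))
    (hφ'exp : ∀ K : ℕ,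
      (fun x : EuclideanSpace ℝ (Fin 3) =>
          ((fderiv ℝ φ x (‖x‖⁻¹ • x) : ℝ) : ℂ)
            - ∑ m ∈ Finset.range (K + 1),
                (-(m + 1) : ℂ) * evalP (p m) (‖x‖⁻¹ • x) / (‖x‖ : ℂ) ^ (m + 2))
        =O[cocompact (EuclideanSpace ℝ (Fin 3))] fun x => ‖x‖ ^ (-(K : ℝ) - 2)) :
    ∀ (ℓ : ℕ) (ζ : ℂ),
      (∫ x : EuclideanSpace ℝ (Fin 3), (ρ x : ℂ) * xzE ζ x ^ ℓ) =
        (2 * ℓ + 1 : ℂ) *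
          ∫ n : Metric.sphere (0 : EuclideanSpace ℝ (Fin 3)) 1,
            evalP (p ℓ) (n : EuclideanSpace ℝ (Fin 3)) *
              xzE ζ (n : EuclideanSpace ℝ (Fin 3)) ^ ℓ
            ∂((volume : Measure (EuclideanSpace ℝ (Fin 3))).toSphere) := by
  intro ℓ ζ
  obtain ⟨G, G1, G2, hG, hG1, hG2, o0, z0, b0, o1, z1, o2, z2⟩ := exists_cutoff
  have cG : Continuous G := continuous_iff_continuousAt.2 fun s => (hG s).continuousAt
  have cG1 : Continuous G1 := continuous_iff_continuousAt.2 fun s => (hG1 s).continuousAt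
  have cg : Continuous (fun y : E3 => xzE ζ y ^ ℓ * wR ℓ G1 G2 ‖y‖) := by
    unfold wR
    fun_prop
  have lim1 := moment_tendsto _ (moment_integrable ρ hρ.continuous C a hC ha hbound ζ ℓ) G cG o0 b0
  have lim2 := expansion_tendsto φ hφ.continuous p ℓ (hφexp ℓ) _ cg
    (fun x hx => by simp [wR_zero ℓ G1 G2 o1 o2 _ (norm_nonneg x) hx])
    (fun x hx => by simp [wR_zero' ℓ G1 G2 z1 z2 _ hx])
  have lim3 := (lim2.add lim1).neg
  have lim4 := poly_limit ℓ
    (fun m => ∫ y, termS p m y * (xzE ζ y ^ ℓ * wR ℓ G1 G2 ‖y‖))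
    (-(0 + ∫ x : E3, (ρ x : ℂ) * xzE ζ x ^ ℓ)) (lim3.congr fun N => by
      have := green_scaled ρ φ hρ.continuous hφ hpoisson G G1 G2 hG hG1 hG2 z0 z1 z2 ζ ℓ
        ((N : ℝ) + 1) (by positivity)
      simp only [← mul_assoc] at this ⊢
      rw [this]
      ring)
  rw [termS_integral p ℓ ζ _ (wR_zero ℓ G1 G2 o1 o2 0 le_rfl one_pos),
    wR_integral ℓ G G1 G2 hG hG1 hG2 o0 z0 z1 z2] at lim4
  linear_combination lim4
end
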